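/- (Exponential decay of superlevel sets of the Riesz potential) Let $\Omega\subseteq\mathbb{R}^n$ be open and bounded, $\delta_1,\delta_2\in(0,n]$, and $\eta\in(0,n)$. There exist constants $c_1,c_2>0$, independent of $f$, such that for every $f\in L^1_{loc}(\Omega)$ (extended by zero outside $\Omega$) with $\int_\Omega |f(y)|^{\delta_2/\eta}\,d\mathcal{H}^{\delta_2}_\infty \le 1$ and every $t>0$, $\mathcal{H}^{\delta_1}_\infty(\{x\in\Omega : I_\eta f(x)>t\}) \le c_1\exp\big(-c_2\,t^{n/(n-\eta)}\big)$. -/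

import Mathlib

open MeasureTheory Metric Set ENNReal

/-- δ-dimensional Hausdorff content via countable ball coverings. -/
noncomputable def hc (n : ℕ) (δ : ℝ) (E : Set (EuclideanSpace ℝ (Fin n))) : ℝ≥0∞ :=
  ⨅ (c : ℕ → EuclideanSpace ℝ (Fin n)) (r : ℕ → ℝ) (_ : ∀ i, 0 < r i)
    (_ : E ⊆ ⋃ i, ball (c i) (r i)), ∑' i, ENNReal.ofReal (r i ^ δ)

/-- Choquet integral of a nonnegative function over Ω with respect to `hc n δ`. -/
noncomputable def choquet (n : ℕ) (δ : ℝ) (Ω : Set (EuclideanSpace ℝ (Fin n)))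
    (f : EuclideanSpace ℝ (Fin n) → ℝ≥0∞) : ℝ≥0∞ :=
  ∫⁻ t in Ioi (0:ℝ), hc n δ {x | x ∈ Ω ∧ ENNReal.ofReal t < f x}

/-- Riesz potential of order η. -/
noncomputable def riesz (n : ℕ) (η : ℝ) (f : EuclideanSpace ℝ (Fin n) → ℝ)
    (x : EuclideanSpace ℝ (Fin n)) : ℝ≥0∞ :=
  ∫⁻ y, ENNReal.ofReal (|f y| / dist x y ^ ((n : ℝ) - η))

/-!
The Choquet integral only sees the superlevel sets of `|f|`, and Lebesgue measure is at most a
constant times the power `n / δ₂` of the content, so the hypothesis bounds `∫ |f| ^ (n / η)`.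

Split the potential at `x` at distance `2 ^ (-N) * R`. The kernel `|x - y| ^ (η - n)` is critical
for the exponent conjugate to `n / η`: all dyadic annuli contribute equally to its norm. By
Hölder's inequality the far part is therefore at most a constant times `N ^ ((n - η) / n)`. The near
part exceeds `1` only if some ball `B(x, r)` with `r ≤ 2 ^ (-N) * R` satisfies
`∫ |f| ^ (n / η) > c * (r / (2 ^ (-N) * R)) ^ δ₁` over it, and by Vitali's covering lemma such
points `x` have content at most a constant times `(2 ^ (-N) * R) ^ δ₁`. Taking `N` to be a small
multiple of `t ^ (n / (n - η))` keeps the far part below `t / 2`.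
-/

open scoped NNReal

section PowersOfExtendedReals

theorem ennreal_rpow_sub_one_mul_self (a : ℝ≥0∞) {m : ℝ} (hm : 1 ≤ m) :
    a ^ (m - 1) * a = a ^ m := by
  conv_rhs => rw [← sub_add_cancel m 1]
  rw [ENNReal.rpow_add_of_nonneg _ _ (sub_nonneg.2 hm) zero_le_one, ENNReal.rpow_one]

theorem ennreal_tsum_rpow_le_rpow_tsum {ι : Type*} (a : ι → ℝ≥0∞) {m : ℝ} (hm : 1 ≤ m) :
    ∑' i, a i ^ m ≤ (∑' i, a i) ^ m :=
  calc ∑' i, a i ^ m = ∑' i, a i ^ (m - 1) * a i :=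
        tsum_congr fun i => (ennreal_rpow_sub_one_mul_self (a i) hm).symm
    _ ≤ ∑' i, (∑' j, a j) ^ (m - 1) * a i := by
        gcongr with i
        exact ENNReal.le_tsum i
    _ = (∑' i, a i) ^ m := by
        rw [ENNReal.tsum_mul_left, ennreal_rpow_sub_one_mul_self _ hm]

theorem ofReal_div_two_pow_rpow {s : ℝ} (hs : 0 ≤ s) (δ : ℝ) (k : ℕ) :
    ENNReal.ofReal ((s / 2 ^ k) ^ δ) = ENNReal.ofReal (s ^ δ) * (2 ^ (-δ)) ^ k := by
  have hreal : (s / 2 ^ k) ^ δ = s ^ δ * (2 ^ (-δ)) ^ k := by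
    rw [Real.div_rpow hs (by positivity), Real.rpow_pow_comm two_pos.le,
      Real.rpow_neg (by positivity), div_eq_mul_inv]
  rw [hreal, ENNReal.ofReal_mul (by positivity), ENNReal.ofReal_pow (by positivity),
    ← ENNReal.ofReal_rpow_of_pos two_pos, ENNReal.ofReal_ofNat]

end PowersOfExtendedReals

section UpperRegular

/-- Upper Ahlfors regularity of dimension `d`: closed balls of radius `r` have measure at most
`V * r ^ d`. It isolates the only property of Lebesgue measure that the estimates need. -/
def IsUpperRegular {X : Type*} [PseudoMetricSpace X] [MeasurableSpace X] (μ : Measure X)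
    (V : ℝ≥0) (d : ℝ) : Prop :=
  ∀ (x : X) (r : ℝ), 0 < r → μ (closedBall x r) ≤ V * ENNReal.ofReal (r ^ d)

theorem isUpperRegular_volume (n : ℕ) :
    IsUpperRegular (volume : Measure (EuclideanSpace ℝ (Fin n)))
      (volume (ball (0 : EuclideanSpace ℝ (Fin n)) 1)).toNNReal n := fun x r hr => by
  rw [Measure.addHaar_closedBall _ _ hr.le, finrank_euclideanSpace_fin, Real.rpow_natCast,
    ENNReal.coe_toNNReal measure_ball_lt_top.ne, mul_comm]

end UpperRegular

section HausdorffContent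

variable {n : ℕ} {δ : ℝ}

theorem hc_mono {E F : Set (EuclideanSpace ℝ (Fin n))} (h : E ⊆ F) : hc n δ E ≤ hc n δ F :=
  iInf_mono fun _ => iInf_mono fun _ => iInf_mono fun _ =>
    iInf_mono' fun hF => ⟨h.trans hF, le_rfl⟩

theorem hc_le_tsum_of_nat {E : Set (EuclideanSpace ℝ (Fin n))}
    {c : ℕ → EuclideanSpace ℝ (Fin n)} {r : ℕ → ℝ} (hr : ∀ i, 0 < r i)
    (hE : E ⊆ ⋃ i, ball (c i) (r i)) : hc n δ E ≤ ∑' i, ENNReal.ofReal (r i ^ δ) :=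
  iInf_le_of_le c <| iInf_le_of_le r <| iInf_le_of_le hr <| iInf_le_of_le hE le_rfl

theorem hc_le_tsum (hδ : 0 < δ) {ι : Type*} [Countable ι]
    {E : Set (EuclideanSpace ℝ (Fin n))} (c : ι → EuclideanSpace ℝ (Fin n)) (r : ι → ℝ)
    (hr : ∀ i, 0 < r i) (hE : E ⊆ ⋃ i, ball (c i) (r i)) :
    hc n δ E ≤ ∑' i, ENNReal.ofReal (r i ^ δ) := by
  refine ENNReal.le_of_forall_pos_le_add fun ε hε _ => ?_
  -- `hc` asks for coverings by balls of positive radius indexed by `ℕ`, so a covering that may be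
  -- finite is padded with infinitely many balls of total content less than `ε`.
  obtain ⟨s, hs, hsum⟩ := ENNReal.exists_pos_sum_of_countable (ENNReal.coe_pos.2 hε).ne' ℕ
  obtain ⟨e⟩ : Nonempty (ℕ ≃ ι ⊕ ℕ) := nonempty_equiv_of_countable
  set c' : ι ⊕ ℕ → EuclideanSpace ℝ (Fin n) := Sum.elim c 0
  set r' : ι ⊕ ℕ → ℝ := Sum.elim r fun i => (s i : ℝ) ^ δ⁻¹
  have hr' : ∀ i, 0 < r' i :=
    Sum.rec hr fun i => Real.rpow_pos_of_pos (NNReal.coe_pos.2 (hs i)) _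
  have hcov : E ⊆ ⋃ k, ball (c' (e k)) (r' (e k)) := fun x hx => by
    obtain ⟨i, hi⟩ := mem_iUnion.1 (hE hx)
    exact mem_iUnion.2 ⟨e.symm (Sum.inl i), by simpa [c', r'] using hi⟩
  have hpad (i : ℕ) : ENNReal.ofReal (r' (Sum.inr i) ^ δ) = s i := by
    simp only [r', Sum.elim_inr]
    rw [Real.rpow_inv_rpow (s i).coe_nonneg hδ.ne', ENNReal.ofReal_coe_nnreal]
  calc hc n δ E ≤ ∑' k, ENNReal.ofReal (r' (e k) ^ δ) := hc_le_tsum_of_nat (fun k => hr' _) hcov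
    _ = ∑' k, ENNReal.ofReal (r' k ^ δ) := e.tsum_eq fun k => ENNReal.ofReal (r' k ^ δ)
    _ = ∑' i, ENNReal.ofReal (r i ^ δ) + ∑' i, (s i : ℝ≥0∞) := by
        rw [Summable.tsum_sum ENNReal.summable ENNReal.summable]
        exact congr_arg _ (tsum_congr hpad)
    _ ≤ ∑' i, ENNReal.ofReal (r i ^ δ) + ε := by gcongr

theorem hc_le_of_subset_ball (hδ : 0 < δ) {E : Set (EuclideanSpace ℝ (Fin n))}
    {c : EuclideanSpace ℝ (Fin n)} {r : ℝ} (hr : 0 < r) (hE : E ⊆ ball c r) :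
    hc n δ E ≤ ENNReal.ofReal (r ^ δ) := by
  simpa using hc_le_tsum hδ (fun _ : Unit => c) (fun _ => r) (fun _ => hr)
    fun x hx => mem_iUnion.2 ⟨(), hE hx⟩

theorem measure_le_mul_hc_rpow {μ : Measure (EuclideanSpace ℝ (Fin n))} {V : ℝ≥0} {d : ℝ}
    (hμ : IsUpperRegular μ V d) (hδ : 0 < δ) (hδd : δ ≤ d)
    (E : Set (EuclideanSpace ℝ (Fin n))) : μ E ≤ V * hc n δ E ^ (d / δ) := by
  have hm : 1 ≤ d / δ := (one_le_div hδ).2 hδd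
  have hcover (c : ℕ → EuclideanSpace ℝ (Fin n)) (r : ℕ → ℝ) (hr : ∀ i, 0 < r i)
      (hE : E ⊆ ⋃ i, ball (c i) (r i)) :
      μ E ≤ V * (∑' i, ENNReal.ofReal (r i ^ δ)) ^ (d / δ) :=
    calc μ E ≤ ∑' i, μ (ball (c i) (r i)) := (measure_mono hE).trans (measure_iUnion_le _)
      _ ≤ ∑' i, V * ENNReal.ofReal (r i ^ δ) ^ (d / δ) := by
          refine ENNReal.tsum_le_tsum fun i => ?_
          rw [ENNReal.ofReal_rpow_of_pos (Real.rpow_pos_of_pos (hr i) _),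
            ← Real.rpow_mul (hr i).le, mul_div_cancel₀ _ hδ.ne']
          exact (measure_mono ball_subset_closedBall).trans (hμ _ _ (hr i))
      _ ≤ V * (∑' i, ENNReal.ofReal (r i ^ δ)) ^ (d / δ) := by
          rw [ENNReal.tsum_mul_left]
          gcongr
          exact ennreal_tsum_rpow_le_rpow_tsum _ hm
  have hm0 : 0 < d / δ := by positivity
  rcases eq_or_ne V 0 with rfl | hV
  · have huniv : E ⊆ ⋃ i : ℕ, ball (0 : EuclideanSpace ℝ (Fin n)) (i + 1) := by
      simp only [iUnion_ball_nat_succ, subset_univ]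
    simpa using hcover _ _ (fun i => by positivity) huniv
  have hV' : (V : ℝ≥0∞) ≠ 0 := ENNReal.coe_ne_zero.2 hV
  rw [← ENNReal.div_le_iff' hV' ENNReal.coe_ne_top, ← ENNReal.rpow_inv_le_iff hm0]
  refine le_iInf fun c => le_iInf fun r => le_iInf fun hr => le_iInf fun hE => ?_
  rw [ENNReal.rpow_inv_le_iff hm0, ENNReal.div_le_iff' hV' ENNReal.coe_ne_top]
  exact hcover c r hr hE

/-- The weak-type estimate for the fractional maximal function of `ν`. -/
theorem mul_hc_setOf_lt_measure_closedBall_le (hδ : 0 < δ)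
    (ν : Measure (EuclideanSpace ℝ (Fin n))) (L : ℝ≥0∞) (R : ℝ) :
    L * hc n δ {x | ∃ r ∈ Ioc 0 R, L * ENNReal.ofReal (r ^ δ) < ν (closedBall x r)} ≤
      ENNReal.ofReal (5 ^ δ) * ν univ := by
  set E := {x | ∃ r ∈ Ioc 0 R, L * ENNReal.ofReal (r ^ δ) < ν (closedBall x r)}
  have hE : ∀ x ∈ E, ∃ r ∈ Ioc 0 R, L * ENNReal.ofReal (r ^ δ) < ν (closedBall x r) :=
    fun x hx => hx
  choose! ρ hρ hρν using hE
  have hρ0 (x) (hx : x ∈ E) : 0 < ρ x := (hρ x hx).1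
  obtain ⟨u, huE, hdisj, hcov⟩ := Vitali.exists_disjoint_subfamily_covering_enlargement_closedBall
    E id ρ R (fun x hx => (hρ x hx).2) 4 (by norm_num)
  have hu : u.Countable := hdisj.countable_of_nonempty_interior fun x hx =>
    ⟨x, ball_subset_interior_closedBall (mem_ball_self (hρ0 x (huE hx)))⟩
  have := hu.to_subtype
  have hcover : E ⊆ ⋃ x : u, ball (x : EuclideanSpace ℝ (Fin n)) (5 * ρ x) := fun x hx => by
    obtain ⟨y, hy, hxy⟩ := hcov x hx
    have hρy := hρ0 y (huE hy)
    exact mem_iUnion.2 ⟨⟨y, hy⟩,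
      closedBall_subset_ball (by linarith) (hxy (mem_closedBall_self (hρ0 x hx).le))⟩
  calc L * hc n δ E ≤ L * ∑' x : u, ENNReal.ofReal ((5 * ρ x) ^ δ) := by
        gcongr
        exact hc_le_tsum hδ _ _ (fun x => mul_pos (by norm_num) (hρ0 x (huE x.2))) hcover
    _ = ENNReal.ofReal (5 ^ δ) * ∑' x : u, L * ENNReal.ofReal (ρ x ^ δ) := by
        simp_rw [← ENNReal.tsum_mul_left]
        refine tsum_congr fun x => ?_
        rw [Real.mul_rpow (by norm_num) (hρ0 x (huE x.2)).le, ENNReal.ofReal_mul (by positivity)]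
        ring
    _ ≤ ENNReal.ofReal (5 ^ δ) * ∑' x : u, ν (closedBall x (ρ x)) := by
        gcongr with x
        exact (hρν x (huE x.2)).le
    _ ≤ ENNReal.ofReal (5 ^ δ) * ν univ := by
        gcongr
        exact tsum_measure_le_measure_univ
          (fun x => measurableSet_closedBall.nullMeasurableSet)
          fun x y hxy => (hdisj x.2 y.2 (Subtype.coe_injective.ne hxy)).aedisjoint

end HausdorffContent

section ChoquetIntegral

variable {n : ℕ} {δ : ℝ} {Ω : Set (EuclideanSpace ℝ (Fin n))}

theorem hc_mul_le_choquet (φ : EuclideanSpace ℝ (Fin n) → ℝ≥0∞) (t : ℝ) :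
    hc n δ {x | x ∈ Ω ∧ ENNReal.ofReal t < φ x} * ENNReal.ofReal t ≤ choquet n δ Ω φ :=
  calc hc n δ {x | x ∈ Ω ∧ ENNReal.ofReal t < φ x} * ENNReal.ofReal t
      = ∫⁻ _ in Ioc 0 t, hc n δ {x | x ∈ Ω ∧ ENNReal.ofReal t < φ x} := by
        simp only [lintegral_const, MeasurableSet.univ, Measure.restrict_apply, univ_inter,
          Real.volume_Ioc, sub_zero]
    _ ≤ ∫⁻ s in Ioc 0 t, hc n δ {x | x ∈ Ω ∧ ENNReal.ofReal s < φ x} :=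
        setLIntegral_mono' measurableSet_Ioc fun s hs => hc_mono fun x hx =>
          ⟨hx.1, (ENNReal.ofReal_le_ofReal hs.2).trans_lt hx.2⟩
    _ ≤ choquet n δ Ω φ := lintegral_mono_set Ioc_subset_Ioi_self

theorem setLIntegral_rpow_le_choquet_rpow {μ : Measure (EuclideanSpace ℝ (Fin n))} {V : ℝ≥0}
    {d : ℝ} (hμ : IsUpperRegular μ V d) (hδ : 0 < δ) (hδd : δ ≤ d) (hΩ : MeasurableSet Ω)
    {φ : EuclideanSpace ℝ (Fin n) → ℝ} (hφ : AEMeasurable φ (μ.restrict Ω)) (hφ0 : ∀ x, 0 ≤ φ x) :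
    ∫⁻ x in Ω, ENNReal.ofReal (φ x ^ (d / δ)) ∂μ ≤
      ENNReal.ofReal (d / δ) * (V * choquet n δ Ω (fun x => ENNReal.ofReal (φ x)) ^ (d / δ)) := by
  set m := d / δ
  have hm : 1 ≤ m := (one_le_div hδ).2 hδd
  have hm1 : 0 ≤ m - 1 := sub_nonneg.2 hm
  set C := choquet n δ Ω fun x => ENNReal.ofReal (φ x) with hC
  set h : ℝ → ℝ≥0∞ := fun t => hc n δ {x | x ∈ Ω ∧ ENNReal.ofReal t < ENNReal.ofReal (φ x)}
  have hanti : Antitone h := fun s t hst => hc_mono fun x hx =>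
    ⟨hx.1, (ENNReal.ofReal_le_ofReal hst).trans_lt hx.2⟩
  have hmeas (t : ℝ) (ht : 0 < t) : μ.restrict Ω {x | t < φ x} ≤ V * h t ^ m := by
    rw [Measure.restrict_apply' hΩ]
    refine (measure_mono ?_).trans (measure_le_mul_hc_rpow hμ hδ hδd _)
    exact fun x hx => ⟨hx.2, (ENNReal.ofReal_lt_ofReal_iff_of_nonneg ht.le).2 hx.1⟩
  have hlevel (t : ℝ) (ht : 0 < t) :
      h t ^ m * ENNReal.ofReal (t ^ (m - 1)) ≤ C ^ (m - 1) * h t :=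
    calc h t ^ m * ENNReal.ofReal (t ^ (m - 1))
        = (h t * ENNReal.ofReal t) ^ (m - 1) * h t := by
          rw [← ennreal_rpow_sub_one_mul_self _ hm, ENNReal.mul_rpow_of_nonneg _ _ hm1,
            ENNReal.ofReal_rpow_of_pos ht]
          ring
      _ ≤ C ^ (m - 1) * h t := by
          gcongr
          exact hc_mul_le_choquet _ t
  rw [lintegral_rpow_eq_lintegral_meas_lt_mul _ (Filter.Eventually.of_forall hφ0) hφ (by linarith)]
  gcongr
  calc ∫⁻ t in Ioi 0, μ.restrict Ω {x | t < φ x} * ENNReal.ofReal (t ^ (m - 1))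
      ≤ ∫⁻ t in Ioi 0, V * (C ^ (m - 1) * h t) := by
        refine setLIntegral_mono' measurableSet_Ioi fun t ht => ?_
        calc μ.restrict Ω {x | t < φ x} * ENNReal.ofReal (t ^ (m - 1))
            ≤ V * h t ^ m * ENNReal.ofReal (t ^ (m - 1)) := by gcongr; exact hmeas t ht
          _ ≤ V * (C ^ (m - 1) * h t) := by
              rw [mul_assoc]
              exact mul_le_mul_right (hlevel t ht) _
    _ = V * (C ^ (m - 1) * C) := by
        rw [lintegral_const_mul _ (hanti.measurable.const_mul _),
          lintegral_const_mul _ hanti.measurable, hC, choquet]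
    _ = V * C ^ m := by rw [ennreal_rpow_sub_one_mul_self _ hm]

end ChoquetIntegral

section RieszKernel

/-- The kernel `|x - y| ^ (-s)`. The Riesz potential of order `η` in dimension `d` is the integral
against `rieszKernel (d - η)`. On the diagonal the value is `0` for `s ≠ 0`, by the convention
`0⁻¹ = 0`. -/
noncomputable def rieszKernel {X : Type*} [PseudoMetricSpace X] (s : ℝ) (x y : X) : ℝ≥0∞ :=
  ENNReal.ofReal (dist x y ^ s)⁻¹

theorem riesz_eq_lintegral_rieszKernel (n : ℕ) (η : ℝ) (f : EuclideanSpace ℝ (Fin n) → ℝ)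
    (x : EuclideanSpace ℝ (Fin n)) :
    riesz n η f x = ∫⁻ y, ENNReal.ofReal |f y| * rieszKernel (n - η) x y := by
  simp only [riesz, rieszKernel, div_eq_mul_inv, ENNReal.ofReal_mul (abs_nonneg _)]

variable {X : Type*} [PseudoMetricSpace X]

theorem rieszKernel_eq_zero_of_dist_eq_zero {s : ℝ} (hs : s ≠ 0) {x y : X} (h : dist x y = 0) :
    rieszKernel s x y = 0 := by
  rw [rieszKernel, h, Real.zero_rpow hs, _root_.inv_zero, ENNReal.ofReal_zero]

theorem exists_mem_dyadic_annulus {x y : X} {R : ℝ} (hxy : 0 < dist x y) (hR : dist x y ≤ R) :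
    ∃ k : ℕ, y ∈ closedBall x (R / 2 ^ k) \ closedBall x (R / 2 ^ (k + 1)) := by
  have hR0 : 0 < R := hxy.trans_le hR
  obtain ⟨k, hlt, hle⟩ := exists_nat_pow_near_of_lt_one (div_pos hxy hR0)
    ((div_le_one hR0).2 hR) one_half_pos one_half_lt_one
  rw [lt_div_iff₀ hR0, one_div_pow, one_div_mul_eq_div] at hlt
  rw [div_le_iff₀ hR0, one_div_pow, one_div_mul_eq_div] at hle
  exact ⟨k, mem_closedBall'.2 hle, fun h => (mem_closedBall'.1 h).not_gt hlt⟩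

variable [MeasurableSpace X] [OpensMeasurableSpace X] {μ : Measure X} {V : ℝ≥0} {d η : ℝ}

theorem measurable_rieszKernel (s : ℝ) (x : X) : Measurable (rieszKernel s x) := by
  unfold rieszKernel
  fun_prop

theorem setLIntegral_closedBall_le_tsum_annuli (F : X → ℝ≥0∞) {x : X}
    (hF : ∀ y, dist x y = 0 → F y = 0) (R : ℝ) :
    ∫⁻ y in closedBall x R, F y ∂μ ≤
      ∑' k : ℕ, ∫⁻ y in closedBall x (R / 2 ^ k) \ closedBall x (R / 2 ^ (k + 1)), F y ∂μ := by
  set A : ℕ → Set X := fun k => closedBall x (R / 2 ^ k) \ closedBall x (R / 2 ^ (k + 1))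
  have hA : MeasurableSet (⋃ k, A k) :=
    .iUnion fun k => measurableSet_closedBall.diff measurableSet_closedBall
  calc ∫⁻ y in closedBall x R, F y ∂μ ≤ ∫⁻ y in ⋃ k, A k, F y ∂μ := by
        rw [← lintegral_indicator measurableSet_closedBall, ← lintegral_indicator hA]
        refine lintegral_mono fun y => indicator_apply_le' (fun hy => ?_) fun _ => zero_le
        rcases (dist_nonneg (x := x) (y := y)).eq_or_lt' with h0 | h0
        · rw [hF y h0]
          exact zero_le
        · exact (indicator_of_mem
            (mem_iUnion.2 (exists_mem_dyadic_annulus h0 (mem_closedBall'.1 hy))) F).ge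
    _ ≤ ∑' k, ∫⁻ y in A k, F y ∂μ := lintegral_iUnion_le A F

theorem setLIntegral_annulus_rieszKernel_rpow_le (hμ : IsUpperRegular μ V d) (hη : 0 < η)
    (hηd : η < d) (x : X) {r : ℝ} (hr : 0 < r) :
    ∫⁻ y in closedBall x r \ closedBall x (r / 2), rieszKernel (d - η) x y ^ (d / (d - η)) ∂μ ≤
      2 ^ d * V := by
  have hd : 0 < d := hη.trans hηd
  have hs : 0 < d - η := sub_pos.2 hηd
  calc ∫⁻ y in closedBall x r \ closedBall x (r / 2), rieszKernel (d - η) x y ^ (d / (d - η)) ∂μ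
      ≤ ∫⁻ _ in closedBall x r \ closedBall x (r / 2), ENNReal.ofReal ((r / 2) ^ d)⁻¹ ∂μ := by
        refine setLIntegral_mono' (measurableSet_closedBall.diff measurableSet_closedBall)
          fun y hy => ?_
        have hle : r / 2 ≤ dist x y := (not_le.1 fun h => hy.2 (mem_closedBall'.2 h)).le
        have hxy : 0 < dist x y := (half_pos hr).trans_le hle
        rw [rieszKernel, ENNReal.ofReal_rpow_of_pos (by positivity), Real.inv_rpow (by positivity),
          ← Real.rpow_mul hxy.le, mul_div_cancel₀ _ hs.ne']
        gcongr
    _ ≤ ENNReal.ofReal ((r / 2) ^ d)⁻¹ * (V * ENNReal.ofReal (r ^ d)) := by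
        rw [setLIntegral_const]
        gcongr
        exact (measure_mono sdiff_subset).trans (hμ x r hr)
    _ = 2 ^ d * V := by
        rw [mul_left_comm, ← ENNReal.ofReal_mul (by positivity), mul_comm, inv_mul_eq_div,
          ← Real.div_rpow hr.le (by positivity), div_div_cancel₀ hr.ne',
          ← ENNReal.ofReal_rpow_of_pos two_pos, ENNReal.ofReal_ofNat]

theorem setLIntegral_mul_rieszKernel_le_rpow_mul_rpow (hη : 0 < η) (hηd : η < d) {g : X → ℝ≥0∞}
    (hg : AEMeasurable g μ) (x : X) (S : Set X) :
    ∫⁻ y in S, g y * rieszKernel (d - η) x y ∂μ ≤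
      (∫⁻ y in S, rieszKernel (d - η) x y ^ (d / (d - η)) ∂μ) ^ ((d - η) / d) *
        (∫⁻ y in S, g y ^ (d / η) ∂μ) ^ (η / d) := by
  have hd : 0 < d := hη.trans hηd
  have hpq : (d / η).HolderConjugate (d / (d - η)) := by
    refine Real.holderConjugate_iff.2 ⟨(one_lt_div hη).2 hηd, ?_⟩
    field_simp
    ring
  have holder := ENNReal.lintegral_mul_le_Lp_mul_Lq (μ.restrict S) hpq hg.restrict
    (measurable_rieszKernel (d - η) x).aemeasurable
  rwa [one_div_div, one_div_div, mul_comm (_ ^ (η / d))] at holder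

/-- Outside a ball of radius `R / 2 ^ N` the potential is at most of order `N ^ ((d - η) / d)`: the
kernel has the critical homogeneity, so each of the `N` dyadic annuli contributes a bounded amount
to its `L ^ (d / (d - η))` norm. -/
theorem setLIntegral_diff_closedBall_mul_rieszKernel_le (hμ : IsUpperRegular μ V d) (hη : 0 < η)
    (hηd : η < d) {g : X → ℝ≥0∞} (hg : AEMeasurable g μ) (x : X) {R : ℝ} (hR : 0 < R) (N : ℕ) :
    ∫⁻ y in closedBall x R \ closedBall x (R / 2 ^ N), g y * rieszKernel (d - η) x y ∂μ ≤
      (N * (2 ^ d * V)) ^ ((d - η) / d) * (∫⁻ y, g y ^ (d / η) ∂μ) ^ (η / d) := by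
  have hd : 0 < d := hη.trans hηd
  have hkernel : ∫⁻ y in closedBall x R \ closedBall x (R / 2 ^ N),
      rieszKernel (d - η) x y ^ (d / (d - η)) ∂μ ≤ N * (2 ^ d * V) := by
    induction N with
    | zero => simp
    | succ N ih =>
      have hannulus := setLIntegral_annulus_rieszKernel_rpow_le hμ hη hηd x
        (r := R / 2 ^ N) (by positivity)
      rw [div_div, ← pow_succ] at hannulus
      push_cast
      rw [add_mul, one_mul]
      exact (lintegral_mono_set (sdiff_triangle _ _ _)).trans
        ((lintegral_union_le _ _ _).trans (add_le_add ih hannulus))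
  refine (setLIntegral_mul_rieszKernel_le_rpow_mul_rpow hη hηd hg x _).trans ?_
  gcongr
  exact Measure.restrict_le_self

theorem setLIntegral_annulus_mul_rieszKernel_le (hμ : IsUpperRegular μ V d) (hη : 0 < η)
    (hηd : η < d) {g : X → ℝ≥0∞} (hg : AEMeasurable g μ) (x : X) {r : ℝ} (hr : 0 < r) :
    ∫⁻ y in closedBall x r \ closedBall x (r / 2), g y * rieszKernel (d - η) x y ∂μ ≤
      (2 ^ d * V) ^ ((d - η) / d) * (∫⁻ y in closedBall x r, g y ^ (d / η) ∂μ) ^ (η / d) := by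
  have hd : 0 < d := hη.trans hηd
  refine (setLIntegral_mul_rieszKernel_le_rpow_mul_rpow hη hηd hg x _).trans ?_
  gcongr
  · exact setLIntegral_annulus_rieszKernel_rpow_le hμ hη hηd x hr
  · exact sdiff_subset

/-- A geometric series of dyadic annuli (Hedberg's argument). -/
theorem exists_setLIntegral_closedBall_mul_rieszKernel_le (hμ : IsUpperRegular μ V d) {δ : ℝ}
    (hδ : 0 < δ) (hη : 0 < η) (hηd : η < d) :
    ∃ κ : ℝ≥0, 0 < κ ∧ ∀ g : X → ℝ≥0∞, AEMeasurable g μ → ∀ (x : X) (s : ℝ) (L : ℝ≥0∞), 0 < s →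
      (∀ r ∈ Ioc 0 s, ∫⁻ y in closedBall x r, g y ^ (d / η) ∂μ ≤ L * ENNReal.ofReal (r ^ δ)) →
        ∫⁻ y in closedBall x s, g y * rieszKernel (d - η) x y ∂μ ≤
          κ * (L * ENNReal.ofReal (s ^ δ)) ^ (η / d) := by
  have hd : 0 < d := hη.trans hηd
  have hs : 0 < d - η := sub_pos.2 hηd
  set D : ℝ≥0∞ := (2 ^ d * V) ^ ((d - η) / d)
  set θ : ℝ≥0∞ := (2 ^ (-δ)) ^ (η / d)
  have hD : D ≠ ∞ := by finiteness
  have hθ : θ < 1 := ENNReal.rpow_lt_one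
    (ENNReal.rpow_lt_one_of_one_lt_of_neg ENNReal.one_lt_two (neg_neg_of_pos hδ)) (by positivity)
  have hκ : D * (1 - θ)⁻¹ ≠ ∞ :=
    ENNReal.mul_ne_top hD (ENNReal.inv_ne_top.2 (tsub_pos_of_lt hθ).ne')
  refine ⟨(D * (1 - θ)⁻¹).toNNReal + 1, by positivity, fun g hg x s L hs0 hL => ?_⟩
  set T := (L * ENNReal.ofReal (s ^ δ)) ^ (η / d)
  have hannulus (k : ℕ) : ∫⁻ y in closedBall x (s / 2 ^ k) \ closedBall x (s / 2 ^ (k + 1)),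
      g y * rieszKernel (d - η) x y ∂μ ≤ D * T * θ ^ k := by
    have hrad : s / 2 ^ k ∈ Ioc 0 s :=
      ⟨by positivity, div_le_self hs0.le (one_le_pow₀ one_le_two)⟩
    have hhalf := setLIntegral_annulus_mul_rieszKernel_le hμ hη hηd hg x hrad.1
    rw [div_div, ← pow_succ] at hhalf
    calc _ ≤ D * (∫⁻ y in closedBall x (s / 2 ^ k), g y ^ (d / η) ∂μ) ^ (η / d) := hhalf
      _ ≤ D * (L * ENNReal.ofReal (s ^ δ) * (2 ^ (-δ)) ^ k) ^ (η / d) := by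
          rw [mul_assoc L, ← ofReal_div_two_pow_rpow hs0.le]
          gcongr
          exact hL _ hrad
      _ = D * T * θ ^ k := by
          rw [ENNReal.mul_rpow_of_nonneg _ _ (by positivity), ← ENNReal.rpow_natCast,
            ← ENNReal.rpow_natCast, ← ENNReal.rpow_mul, mul_comm (k : ℝ), ENNReal.rpow_mul,
            mul_assoc]
  calc ∫⁻ y in closedBall x s, g y * rieszKernel (d - η) x y ∂μ
      ≤ ∑' k : ℕ, D * T * θ ^ k := by
        refine (setLIntegral_closedBall_le_tsum_annuli _ (fun y hy => ?_) s).trans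
          (ENNReal.tsum_le_tsum hannulus)
        rw [rieszKernel_eq_zero_of_dist_eq_zero hs.ne' hy, mul_zero]
    _ = D * (1 - θ)⁻¹ * T := by
        rw [ENNReal.tsum_mul_left, ENNReal.tsum_geometric, mul_right_comm]
    _ ≤ ((D * (1 - θ)⁻¹).toNNReal + 1 : ℝ≥0) * T := by
        gcongr
        rw [ENNReal.coe_add, ENNReal.coe_toNNReal hκ]
        exact le_self_add

theorem lintegral_mul_rieszKernel_le_add (hμ : IsUpperRegular μ V d) (hη : 0 < η) (hηd : η < d)
    {g : X → ℝ≥0∞} (hg : AEMeasurable g μ) (x : X) {R : ℝ} (hR : 0 < R)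
    (hgR : ∀ y ∉ closedBall x R, g y = 0) (N : ℕ) :
    ∫⁻ y, g y * rieszKernel (d - η) x y ∂μ ≤
      (N * (2 ^ d * V)) ^ ((d - η) / d) * (∫⁻ y, g y ^ (d / η) ∂μ) ^ (η / d) +
        ∫⁻ y in closedBall x (R / 2 ^ N), g y * rieszKernel (d - η) x y ∂μ := by
  have hsupport : ∫⁻ y in closedBall x R, g y * rieszKernel (d - η) x y ∂μ =
      ∫⁻ y, g y * rieszKernel (d - η) x y ∂μ :=
    setLIntegral_eq_of_support_subset fun y hy => by
      by_contra hyR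
      exact hy (by simp only [hgR y hyR, zero_mul])
  calc ∫⁻ y, g y * rieszKernel (d - η) x y ∂μ
      ≤ ∫⁻ y in (closedBall x R \ closedBall x (R / 2 ^ N)) ∪ closedBall x (R / 2 ^ N),
          g y * rieszKernel (d - η) x y ∂μ :=
        hsupport ▸ lintegral_mono_set (sdiff_union_self.symm ▸ subset_union_left)
    _ ≤ _ := (lintegral_union_le _ _ _).trans <| by
        gcongr
        exact setLIntegral_diff_closedBall_mul_rieszKernel_le hμ hη hηd hg x hR N

theorem one_lt_setLIntegral_closedBall_mul_rieszKernel (hμ : IsUpperRegular μ V d) (hη : 0 < η)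
    (hηd : η < d) {g : X → ℝ≥0∞} (hg : AEMeasurable g μ) {x : X} {R : ℝ} (hR : 0 < R)
    (hgR : ∀ y ∉ closedBall x R, g y = 0) {N : ℕ} {t : ℝ} (ht : 2 ≤ t)
    (hfar : (N * (2 ^ d * V)) ^ ((d - η) / d) * (∫⁻ y, g y ^ (d / η) ∂μ) ^ (η / d) ≤
      ENNReal.ofReal (t / 2))
    (hlt : ENNReal.ofReal t < ∫⁻ y, g y * rieszKernel (d - η) x y ∂μ) :
    1 < ∫⁻ y in closedBall x (R / 2 ^ N), g y * rieszKernel (d - η) x y ∂μ := by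
  by_contra! hnear
  refine hlt.not_ge ?_
  calc ∫⁻ y, g y * rieszKernel (d - η) x y ∂μ ≤ ENNReal.ofReal (t / 2) + 1 :=
        (lintegral_mul_rieszKernel_le_add hμ hη hηd hg x hR hgR N).trans (add_le_add hfar hnear)
    _ ≤ ENNReal.ofReal (t / 2) + ENNReal.ofReal (t / 2) := by
        gcongr
        exact ENNReal.one_le_ofReal.2 (by linarith)
    _ = ENNReal.ofReal t := by
        rw [← ENNReal.ofReal_add (by positivity) (by positivity), add_halves]

end RieszKernel

section ChoiceOfScale

theorem exists_pos_forall_floor_mul_rpow_le (D b : ℝ≥0) {α : ℝ} (hα : 0 < α) :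
    ∃ a : ℝ, 0 < a ∧ ∀ t : ℝ, 0 < t →
      ((⌊a * t ^ α⁻¹⌋₊ : ℝ≥0∞) * D) ^ α * b ≤ ENNReal.ofReal (t / 2) := by
  set a : ℝ := (2 * ((b : ℝ) + 1))⁻¹ ^ α⁻¹ / (D + 1) with ha_def
  have ha : 0 < a := by positivity
  have haD : (a * D) ^ α ≤ (2 * ((b : ℝ) + 1))⁻¹ :=
    calc (a * D) ^ α ≤ ((2 * ((b : ℝ) + 1))⁻¹ ^ α⁻¹) ^ α := by
          gcongr
          rw [ha_def, div_mul_eq_mul_div, div_le_iff₀ (by positivity)]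
          gcongr
          exact le_add_of_nonneg_right zero_le_one
      _ = (2 * ((b : ℝ) + 1))⁻¹ := Real.rpow_inv_rpow (by positivity) hα.ne'
  have hreal (t : ℝ) (ht : 0 < t) : (⌊a * t ^ α⁻¹⌋₊ * D : ℝ) ^ α * b ≤ t / 2 :=
    calc (⌊a * t ^ α⁻¹⌋₊ * D : ℝ) ^ α * b ≤ (a * t ^ α⁻¹ * D) ^ α * b := by
          gcongr
          exact Nat.floor_le (by positivity)
      _ = t * ((a * D) ^ α * b) := by
          rw [mul_right_comm, Real.mul_rpow (by positivity) (by positivity),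
            Real.rpow_inv_rpow ht.le hα.ne']
          ring
      _ ≤ t * ((2 * ((b : ℝ) + 1))⁻¹ * (b + 1)) := by
          gcongr
          exact le_add_of_nonneg_right zero_le_one
      _ = t / 2 := by field_simp
  refine ⟨a, ha, fun t ht => ?_⟩
  have hcast : ((⌊a * t ^ α⁻¹⌋₊ : ℝ≥0∞) * D) ^ α * b =
      ENNReal.ofReal ((⌊a * t ^ α⁻¹⌋₊ * D : ℝ) ^ α * b) := by
    rw [ENNReal.ofReal_mul (by positivity),
      ← ENNReal.ofReal_rpow_of_nonneg (by positivity) hα.le,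
      ENNReal.ofReal_mul (by positivity), ENNReal.ofReal_natCast, ENNReal.ofReal_coe_nnreal,
      ENNReal.ofReal_coe_nnreal]
  exact hcast ▸ ENNReal.ofReal_le_ofReal (hreal t ht)

theorem div_two_pow_floor_rpow_le {R δ : ℝ} (hR : 0 ≤ R) (hδ : 0 ≤ δ) (u : ℝ) :
    (R / 2 ^ ⌊u⌋₊) ^ δ ≤ (2 * R) ^ δ * Real.exp (-(δ * Real.log 2) * u) := by
  have hpow : Real.exp (Real.log 2 * u) ≤ 2 ^ (⌊u⌋₊ + 1) := by
    rw [← Real.rpow_def_of_pos two_pos, ← Real.rpow_natCast]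
    refine Real.rpow_le_rpow_of_exponent_le one_le_two ?_
    exact_mod_cast (Nat.lt_floor_add_one u).le
  calc (R / 2 ^ ⌊u⌋₊) ^ δ = (2 * R / 2 ^ (⌊u⌋₊ + 1)) ^ δ := by
        rw [pow_succ', mul_div_mul_left _ _ two_ne_zero]
    _ ≤ (2 * R / Real.exp (Real.log 2 * u)) ^ δ := by gcongr
    _ = (2 * R) ^ δ * Real.exp (-(δ * Real.log 2) * u) := by
        rw [div_eq_mul_inv, ← Real.exp_neg, Real.mul_rpow (by positivity) (by positivity),
          ← Real.exp_mul]
        ring_nf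

theorem le_mul_exp_neg_rpow_of_forall_ge {F : ℝ → ℝ≥0∞} {A B c q t₀ : ℝ} (hA : 0 ≤ A)
    (hB : 0 ≤ B) (hc : 0 ≤ c) (hq : 0 ≤ q) (hbound : ∀ t, F t ≤ ENNReal.ofReal B)
    (hdecay : ∀ t, t₀ ≤ t → F t ≤ ENNReal.ofReal (A * Real.exp (-c * t ^ q))) {t : ℝ}
    (ht : 0 ≤ t) :
    F t ≤ ENNReal.ofReal ((A + B * Real.exp (c * t₀ ^ q)) * Real.exp (-c * t ^ q)) := by
  rcases le_total t₀ t with hle | hle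
  · refine (hdecay t hle).trans (ENNReal.ofReal_le_ofReal ?_)
    gcongr
    exact le_add_of_nonneg_right (by positivity)
  · refine (hbound t).trans (ENNReal.ofReal_le_ofReal ?_)
    have hone : 1 ≤ Real.exp (c * t₀ ^ q) * Real.exp (-c * t ^ q) := by
      rw [← Real.exp_add, Real.one_le_exp_iff, neg_mul, ← sub_eq_add_neg, sub_nonneg]
      gcongr
    calc B ≤ B * (Real.exp (c * t₀ ^ q) * Real.exp (-c * t ^ q)) := le_mul_of_one_le_right hB hone
      _ ≤ A * Real.exp (-c * t ^ q) + B * (Real.exp (c * t₀ ^ q) * Real.exp (-c * t ^ q)) :=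
          le_add_of_nonneg_left (by positivity)
      _ = (A + B * Real.exp (c * t₀ ^ q)) * Real.exp (-c * t ^ q) := by ring

end ChoiceOfScale

section SuperlevelSets

variable {n : ℕ} {μ : Measure (EuclideanSpace ℝ (Fin n))} {V : ℝ≥0} {d δ η : ℝ}

theorem exists_hc_setOf_one_lt_setLIntegral_closedBall_le (hμ : IsUpperRegular μ V d)
    (hδ : 0 < δ) (hη : 0 < η) (hηd : η < d) :
    ∃ C : ℝ≥0, ∀ g : EuclideanSpace ℝ (Fin n) → ℝ≥0∞, AEMeasurable g μ → ∀ s : ℝ, 0 < s →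
      hc n δ {x | 1 < ∫⁻ y in closedBall x s, g y * rieszKernel (d - η) x y ∂μ} ≤
        C * ENNReal.ofReal (s ^ δ) * ∫⁻ y, g y ^ (d / η) ∂μ := by
  have hd : 0 < d := hη.trans hηd
  obtain ⟨κ, hκ, hnear⟩ := exists_setLIntegral_closedBall_mul_rieszKernel_le hμ hδ hη hηd
  refine ⟨(5 ^ δ) * κ ^ (d / η), fun g hg s hs => ?_⟩
  set ν := μ.withDensity fun y => g y ^ (d / η)
  -- The density threshold at which the estimate for the truncated potential equals `1`.
  set L : ℝ≥0∞ := ((κ : ℝ≥0∞) ^ (d / η) * ENNReal.ofReal (s ^ δ))⁻¹ with hL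
  have hsδ : ENNReal.ofReal (s ^ δ) ≠ 0 := (ENNReal.ofReal_pos.2 (by positivity)).ne'
  have hκp : (κ : ℝ≥0∞) ^ (d / η) ≠ 0 :=
    (ENNReal.rpow_pos (ENNReal.coe_pos.2 hκ) ENNReal.coe_ne_top).ne'
  have hκp' : (κ : ℝ≥0∞) ^ (d / η) ≠ ∞ := by finiteness
  have hexp : d / η * (η / d) = 1 := by field_simp
  have hthreshold : κ * (L * ENNReal.ofReal (s ^ δ)) ^ (η / d) = 1 := by
    rw [hL, ENNReal.mul_inv (.inl hκp) (.inl hκp'), mul_assoc,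
      ENNReal.inv_mul_cancel hsδ ENNReal.ofReal_ne_top, mul_one, ENNReal.inv_rpow,
      ← ENNReal.rpow_mul, hexp, ENNReal.rpow_one,
      ENNReal.mul_inv_cancel (ENNReal.coe_pos.2 hκ).ne' ENNReal.coe_ne_top]
  have hL0 : L ≠ 0 := ENNReal.inv_ne_zero.2 (ENNReal.mul_ne_top hκp' ENNReal.ofReal_ne_top)
  have hLtop : L ≠ ∞ := ENNReal.inv_ne_top.2 (mul_ne_zero hκp hsδ)
  have hsubset : {x | 1 < ∫⁻ y in closedBall x s, g y * rieszKernel (d - η) x y ∂μ} ⊆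
      {x | ∃ r ∈ Ioc 0 s, L * ENNReal.ofReal (r ^ δ) < ν (closedBall x r)} := fun x hx => by
    by_contra hsmall
    refine hx.not_ge (hthreshold ▸ hnear g hg x s L hs fun r hr => ?_)
    rw [← withDensity_apply _ measurableSet_closedBall]
    exact not_lt.1 fun hlarge => hsmall ⟨r, hr, hlarge⟩
  have hν : ν univ = ∫⁻ y, g y ^ (d / η) ∂μ := by
    rw [withDensity_apply _ MeasurableSet.univ, Measure.restrict_univ]
  calc hc n δ {x | 1 < ∫⁻ y in closedBall x s, g y * rieszKernel (d - η) x y ∂μ}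
      ≤ L⁻¹ * (ENNReal.ofReal (5 ^ δ) * ν univ) :=
        (hc_mono hsubset).trans <| (ENNReal.mul_le_iff_le_inv hL0 hLtop).1 <|
          mul_hc_setOf_lt_measure_closedBall_le hδ ν L s
    _ = (5 ^ δ * κ ^ (d / η) : ℝ≥0) * ENNReal.ofReal (s ^ δ) * ∫⁻ y, g y ^ (d / η) ∂μ := by
        rw [hL, _root_.inv_inv, hν, ENNReal.coe_mul, ENNReal.coe_rpow_of_ne_zero (by norm_num),
          ENNReal.coe_rpow_of_nonneg κ (by positivity),
          ← ENNReal.ofReal_rpow_of_pos (p := δ) (by norm_num : (0 : ℝ) < 5), ENNReal.ofReal_ofNat,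
          ENNReal.coe_ofNat]
        ring

theorem exists_hc_setOf_lt_lintegral_mul_rieszKernel_le (hμ : IsUpperRegular μ V d) (hδ : 0 < δ)
    (hη : 0 < η) (hηd : η < d) {Ω : Set (EuclideanSpace ℝ (Fin n))} {R : ℝ} (hR : 0 < R)
    (hΩR : Ω ⊆ ball 0 R) :
    ∃ C : ℝ≥0, ∀ g : EuclideanSpace ℝ (Fin n) → ℝ≥0∞, AEMeasurable g μ → (∀ y ∉ Ω, g y = 0) →
      ∀ (N : ℕ) (t : ℝ), 2 ≤ t →
        (N * (2 ^ d * V)) ^ ((d - η) / d) * (∫⁻ y, g y ^ (d / η) ∂μ) ^ (η / d) ≤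
          ENNReal.ofReal (t / 2) →
        hc n δ {x | x ∈ Ω ∧ ENNReal.ofReal t < ∫⁻ y, g y * rieszKernel (d - η) x y ∂μ} ≤
          C * ENNReal.ofReal ((2 * R / 2 ^ N) ^ δ) * ∫⁻ y, g y ^ (d / η) ∂μ := by
  obtain ⟨C, hC⟩ := exists_hc_setOf_one_lt_setLIntegral_closedBall_le hμ hδ hη hηd
  refine ⟨C, fun g hg hgΩ N t ht hfar => (hc_mono ?_).trans (hC g hg _ (by positivity))⟩
  rintro x ⟨hxΩ, hlt⟩
  refine one_lt_setLIntegral_closedBall_mul_rieszKernel hμ hη hηd hg (by positivity)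
    (fun y hy => hgΩ y fun hyΩ => hy ?_) ht hfar hlt
  rw [mem_closedBall, two_mul]
  exact (dist_triangle_right y x 0).trans (add_le_add (hΩR hyΩ).le (hΩR hxΩ).le)

theorem exists_hc_setOf_lt_lintegral_mul_rieszKernel_le_exp (hμ : IsUpperRegular μ V d)
    (hδ : 0 < δ) (hη : 0 < η) (hηd : η < d) {Ω : Set (EuclideanSpace ℝ (Fin n))}
    (hΩ : Bornology.IsBounded Ω) (M : ℝ≥0) :
    ∃ c₁ c₂ : ℝ, 0 < c₁ ∧ 0 < c₂ ∧ ∀ g : EuclideanSpace ℝ (Fin n) → ℝ≥0∞, AEMeasurable g μ →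
      (∀ y ∉ Ω, g y = 0) → ∫⁻ y, g y ^ (d / η) ∂μ ≤ M → ∀ t : ℝ, 0 < t →
        hc n δ {x | x ∈ Ω ∧ ENNReal.ofReal t < ∫⁻ y, g y * rieszKernel (d - η) x y ∂μ} ≤
          ENNReal.ofReal (c₁ * Real.exp (-c₂ * t ^ (d / (d - η)))) := by
  have hd : 0 < d := hη.trans hηd
  have hs : 0 < d - η := sub_pos.2 hηd
  obtain ⟨R, hR, hΩR⟩ := hΩ.subset_ball_lt 0 0
  obtain ⟨C, hC⟩ := exists_hc_setOf_lt_lintegral_mul_rieszKernel_le hμ hδ hη hηd hR hΩR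
  obtain ⟨a, ha, hfloor⟩ := exists_pos_forall_floor_mul_rpow_le (2 ^ d * V) (M ^ (η / d))
    (div_pos hs hd)
  rw [inv_div] at hfloor
  set q := d / (d - η)
  refine ⟨C * (2 * (2 * R)) ^ δ * M + R ^ δ * Real.exp (δ * Real.log 2 * a * 2 ^ q),
    δ * Real.log 2 * a, by positivity, by positivity, fun g hg hgΩ hgM t ht => ?_⟩
  set F : ℝ → ℝ≥0∞ := fun t =>
    hc n δ {x | x ∈ Ω ∧ ENNReal.ofReal t < ∫⁻ y, g y * rieszKernel (d - η) x y ∂μ}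
  have hbound (t : ℝ) : F t ≤ ENNReal.ofReal (R ^ δ) :=
    hc_le_of_subset_ball hδ hR fun x hx => hΩR hx.1
  have hdecay (t : ℝ) (ht : 2 ≤ t) : F t ≤ ENNReal.ofReal
      (C * (2 * (2 * R)) ^ δ * M * Real.exp (-(δ * Real.log 2 * a) * t ^ q)) := by
    have hfar : (⌊a * t ^ q⌋₊ * (2 ^ d * V)) ^ ((d - η) / d) *
        (∫⁻ y, g y ^ (d / η) ∂μ) ^ (η / d) ≤ ENNReal.ofReal (t / 2) := by
      refine le_trans ?_ (hfloor t (two_pos.trans_le ht))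
      rw [ENNReal.coe_mul, ENNReal.coe_rpow_of_nonneg 2 hd.le, ENNReal.coe_ofNat,
        ENNReal.coe_rpow_of_nonneg M (div_nonneg hη.le hd.le)]
      gcongr
    calc F t ≤ C * ENNReal.ofReal ((2 * R / 2 ^ ⌊a * t ^ q⌋₊) ^ δ) * ∫⁻ y, g y ^ (d / η) ∂μ :=
          hC g hg hgΩ _ t ht hfar
      _ ≤ C * ENNReal.ofReal ((2 * (2 * R)) ^ δ *
            Real.exp (-(δ * Real.log 2) * (a * t ^ q))) * M := by
          gcongr
          exact div_two_pow_floor_rpow_le (by positivity) hδ.le _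
      _ = _ := by
          rw [← ENNReal.ofReal_coe_nnreal, ← ENNReal.ofReal_coe_nnreal,
            ← ENNReal.ofReal_mul (by positivity), ← ENNReal.ofReal_mul (by positivity)]
          ring_nf
  exact le_mul_exp_neg_rpow_of_forall_ge (by positivity) (by positivity) (by positivity)
    (by positivity) hbound hdecay ht.le

end SuperlevelSets

theorem lintegral_indicator_rpow_le_of_choquet_le_one (n : ℕ) {Ω : Set (EuclideanSpace ℝ (Fin n))}
    (hΩ : MeasurableSet Ω) {δ η : ℝ} (hδ : 0 < δ) (hδn : δ ≤ n) (hη : 0 < η)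
    {f : EuclideanSpace ℝ (Fin n) → ℝ} (hf : AEMeasurable f (volume.restrict Ω))
    (hchoquet : choquet n δ Ω (fun y => ENNReal.ofReal (|f y| ^ (δ / η))) ≤ 1) :
    ∫⁻ y, ENNReal.ofReal |Ω.indicator f y| ^ (n / η) ≤
      (Real.toNNReal (n / δ) *
        (volume (ball (0 : EuclideanSpace ℝ (Fin n)) 1)).toNNReal : ℝ≥0) := by
  have hn : (0 : ℝ) < n := hδ.trans_le hδn
  have hexp (y) : (|f y| ^ (δ / η)) ^ (n / δ) = |f y| ^ (n / η) := by
    rw [← Real.rpow_mul (abs_nonneg _), div_mul_div_comm, mul_comm, mul_div_mul_right _ _ hδ.ne']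
  have hindicator (y) : ENNReal.ofReal |Ω.indicator f y| ^ (n / η) =
      Ω.indicator (fun y => ENNReal.ofReal ((|f y| ^ (δ / η)) ^ (n / δ))) y := by
    by_cases hy : y ∈ Ω
    · rw [indicator_of_mem hy, indicator_of_mem hy, hexp,
        ENNReal.ofReal_rpow_of_nonneg (abs_nonneg _) (by positivity)]
    · rw [indicator_of_notMem hy, indicator_of_notMem hy, abs_zero, ENNReal.ofReal_zero,
        ENNReal.zero_rpow_of_pos (by positivity)]
  calc ∫⁻ y, ENNReal.ofReal |Ω.indicator f y| ^ (n / η)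
      = ∫⁻ y in Ω, ENNReal.ofReal ((|f y| ^ (δ / η)) ^ (n / δ)) := by
        simp_rw [hindicator, lintegral_indicator hΩ]
    _ ≤ ENNReal.ofReal (n / δ) * ((volume (ball (0 : EuclideanSpace ℝ (Fin n)) 1)).toNNReal *
          choquet n δ Ω (fun y => ENNReal.ofReal (|f y| ^ (δ / η))) ^ (n / δ)) :=
        setLIntegral_rpow_le_choquet_rpow (isUpperRegular_volume n) hδ hδn hΩ
          ((continuous_abs.measurable.comp_aemeasurable hf).pow_const _) fun y => by positivity
    _ ≤ ENNReal.ofReal (n / δ) * ((volume (ball (0 : EuclideanSpace ℝ (Fin n)) 1)).toNNReal *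
          1 ^ (n / δ)) := by gcongr
    _ = _ := by rw [ENNReal.one_rpow, mul_one, ENNReal.coe_mul, ENNReal.ofReal]

theorem stmt_18_general (n : ℕ) (Ω : Set (EuclideanSpace ℝ (Fin n))) (hΩm : MeasurableSet Ω)
    (hΩb : Bornology.IsBounded Ω) (δ₁ δ₂ η : ℝ) (h1 : 0 < δ₁) (h2 : 0 < δ₂) (h2n : δ₂ ≤ n)
    (hη : 0 < η) (hηn : η < n) :
    ∃ c₁ c₂ : ℝ, 0 < c₁ ∧ 0 < c₂ ∧
      ∀ f : EuclideanSpace ℝ (Fin n) → ℝ, AEMeasurable f (volume.restrict Ω) →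
        choquet n δ₂ Ω (fun y => ENNReal.ofReal (|f y| ^ (δ₂ / η))) ≤ 1 →
        ∀ t : ℝ, 0 < t →
          hc n δ₁ {x | x ∈ Ω ∧ ENNReal.ofReal t < riesz n η (Ω.indicator f) x} ≤
            ENNReal.ofReal (c₁ * Real.exp (-c₂ * t ^ ((n : ℝ) / ((n : ℝ) - η)))) := by
  obtain ⟨c₁, c₂, hc₁, hc₂, hdecay⟩ := exists_hc_setOf_lt_lintegral_mul_rieszKernel_le_exp
    (isUpperRegular_volume n) h1 hη hηn hΩb
    (Real.toNNReal (n / δ₂) * (volume (ball (0 : EuclideanSpace ℝ (Fin n)) 1)).toNNReal)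
  refine ⟨c₁, c₂, hc₁, hc₂, fun f hf hchoquet t ht => ?_⟩
  simp only [riesz_eq_lintegral_rieszKernel]
  refine hdecay (fun y => ENNReal.ofReal |Ω.indicator f y|) ?_ (fun y hy => ?_)
    (lintegral_indicator_rpow_le_of_choquet_le_one n hΩm h2 h2n hη hf hchoquet) t ht
  · exact (continuous_abs.measurable.comp_aemeasurable
      ((aemeasurable_indicator_iff hΩm).2 hf)).ennreal_ofReal
  · rw [indicator_of_notMem hy, abs_zero, ENNReal.ofReal_zero]

theorem stmt_18 (n : ℕ) (Ω : Set (EuclideanSpace ℝ (Fin n))) (hΩo : IsOpen Ω)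
    (hΩb : Bornology.IsBounded Ω) (δ₁ δ₂ η : ℝ)
    (h1 : 0 < δ₁) (h1n : δ₁ ≤ n) (h2 : 0 < δ₂) (h2n : δ₂ ≤ n) (hη : 0 < η) (hηn : η < n) :
    ∃ c₁ c₂ : ℝ, 0 < c₁ ∧ 0 < c₂ ∧
      ∀ f : EuclideanSpace ℝ (Fin n) → ℝ, LocallyIntegrableOn f Ω →
        choquet n δ₂ Ω (fun y => ENNReal.ofReal (|f y| ^ (δ₂ / η))) ≤ 1 →
        ∀ t : ℝ, 0 < t →
          hc n δ₁ {x | x ∈ Ω ∧ ENNReal.ofReal t < riesz n η (Ω.indicator f) x} ≤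
            ENNReal.ofReal (c₁ * Real.exp (-c₂ * t ^ ((n : ℝ) / ((n : ℝ) - η)))) :=
  let ⟨c₁, c₂, hc₁, hc₂, hdecay⟩ :=
    stmt_18_general n Ω hΩo.measurableSet hΩb δ₁ δ₂ η h1 h2 h2n hη hηn
  ⟨c₁, c₂, hc₁, hc₂, fun f hf => hdecay f hf.aestronglyMeasurable.aemeasurable⟩
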